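/- Fix n ≥ 1, an integer k ≥ 1, and b ∈ (-1,1), and let c_k = k(n+k-1). Let f_k : [0,1) → R be the solution of the ordinary differential equation f_k''(r) + (n/r - 2br/(1-r²)) f_k'(r) - (c_k/r²) f_k(r) = 0 on (0,1) which satisfies f_k(r) = O(r^k) as r → 0 and lim_{r→1} f_k(r) = 1. Let α_k and β_k be the two roots of X² - ((n-1)/2 + k + b)X + kb/2 = 0, and define A(b,k) = 2^{-b} (Γ(b+1)/Γ(1-b)) (Γ(β_k+1-b)Γ(α_k+1-b)/(Γ(α_k+1)Γ(β_k+1))) k. Then lim_{r→1⁻} ((1-r²)/2)^b f_k'(r) = A(b,k). -/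

import Mathlib

/-!
Put `c = (n + 2k + 1) / 2`. Under `s = r²` the radial equation becomes Gauss's hypergeometric
equation with parameters `α, β; c`, so `r ^ k F(α, β; c; r²)` is a solution, and reduction of order
shows that every solution which is `O(r ^ k)` at `0` is a multiple of it; the normalisation at `1`
makes the factor `1 / F(α, β; c; 1)`. A contiguous relation puts the derivative in the form
`k r ^ (k - 1) (1 - r²) F(α + 1, β + 1; c; r²)`, so that everything comes down to the behaviour of
`F(a, b; c; s)` as `s → 1` when `c < a + b`. There the coefficients of `F(a, b; c; s)` and of
`(1 - s) ^ (c - a - b) = F(a + b - c, 1; 1; s)` have a ratio tending to a quotient of Gamma values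
(Euler's product for `Γ`), and an Abelian theorem passes this ratio on to the functions. Euler's
transformation `F(a, b; c; s) = (1 - s) ^ (c - a - b) F(c - a, c - b; c; s)` turns the same limit
into Gauss's formula for `F(α, β; c; 1)`.
-/

noncomputable section
open Real Filter Set

open Asymptotics
open scoped Topology Nat

/-! ### The hypergeometric series inside the unit disc -/

section PowerSeries

variable {𝕂 : Type*} [RCLike 𝕂] {a b c x : 𝕂}

theorem ordinaryHypergeometricCoefficient_succ (a b : 𝕂) {m : ℕ} (hc : c ≠ -m) :
    (m + 1) * (c + m) * ordinaryHypergeometricCoefficient a b c (m + 1) =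
      (a + m) * (b + m) * ordinaryHypergeometricCoefficient a b c m := by
  have hm : (m : 𝕂) + 1 ≠ 0 := Nat.cast_add_one_ne_zero m
  have hcm : c + m ≠ 0 := fun h ↦ hc (eq_neg_of_add_eq_zero_left h)
  simp only [ordinaryHypergeometricCoefficient, ascPochhammer_succ_eval, Nat.factorial_succ,
    Nat.cast_mul, Nat.cast_succ, mul_inv]
  field_simp

theorem ascPochhammer_succ_eval_left (a : 𝕂) (m : ℕ) :
    (ascPochhammer 𝕂 (m + 1)).eval a = a * (ascPochhammer 𝕂 m).eval (a + 1) := by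
  simp [ascPochhammer_succ_left]

theorem ordinaryHypergeometricCoefficient_succ_shift (a b c : 𝕂) (m : ℕ) :
    (m + 1) * ordinaryHypergeometricCoefficient a b c (m + 1) =
      a * b / c * ordinaryHypergeometricCoefficient (a + 1) (b + 1) (c + 1) m := by
  have hm : (m : 𝕂) + 1 ≠ 0 := Nat.cast_add_one_ne_zero m
  simp only [ordinaryHypergeometricCoefficient, ascPochhammer_succ_eval_left, Nat.factorial_succ,
    Nat.cast_mul, Nat.cast_succ, mul_inv]
  field_simp

theorem one_le_radius_ordinaryHypergeometricSeries (a b c : 𝕂) :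
    1 ≤ (ordinaryHypergeometricSeries 𝕂 a b c).radius := by
  by_cases h : ∀ k : ℕ, ↑k ≠ -a ∧ ↑k ≠ -b ∧ ↑k ≠ -c
  · exact (ordinaryHypergeometricSeries_radius_eq_one 𝕂 a b c h).ge
  simp only [not_forall, not_and_or, not_not] at h
  suffices (ordinaryHypergeometricSeries 𝕂 a b c).radius = ⊤ from this ▸ le_top
  obtain ⟨k, h | h | h⟩ := h <;>
    rw [eq_neg_iff_add_eq_zero, add_comm, ← eq_neg_iff_add_eq_zero] at h <;> subst h
  · exact ordinaryHypergeometric_radius_top_of_neg_nat₁ 𝕂 b c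
  · exact ordinaryHypergeometric_radius_top_of_neg_nat₂ 𝕂 a c
  · exact ordinaryHypergeometric_radius_top_of_neg_nat₃ 𝕂 a b

theorem hasFPowerSeriesOnBall_ordinaryHypergeometric (a b c : 𝕂) :
    HasFPowerSeriesOnBall (₂F₁ a b c) (ordinaryHypergeometricSeries 𝕂 a b c) 0 1 :=
  ((ordinaryHypergeometricSeries 𝕂 a b c).hasFPowerSeriesOnBall
    (one_pos.trans_le (one_le_radius_ordinaryHypergeometricSeries a b c))).mono one_pos
    (one_le_radius_ordinaryHypergeometricSeries a b c)

theorem ordinaryHypergeometricSeries_coeff (a b c : 𝕂) (m : ℕ) :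
    (ordinaryHypergeometricSeries 𝕂 a b c).coeff m = ordinaryHypergeometricCoefficient a b c m :=
  FormalMultilinearSeries.coeff_ofScalars

theorem hasSum_ordinaryHypergeometric (a b c : 𝕂) (hx : ‖x‖ < 1) :
    HasSum (fun m ↦ ordinaryHypergeometricCoefficient a b c m * x ^ m) (₂F₁ a b c x) := by
  simpa [ordinaryHypergeometricSeries_coeff, mul_comm] using
    (hasFPowerSeriesOnBall_ordinaryHypergeometric a b c).hasSum
      (y := x) (by simpa [← ofReal_norm] using hx)

theorem hasDerivAt_ordinaryHypergeometric (a b c : 𝕂) (hx : ‖x‖ < 1) :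
    HasDerivAt (₂F₁ a b c) (a * b / c * ₂F₁ (a + 1) (b + 1) (c + 1) x) x := by
  have hF := hasFPowerSeriesOnBall_ordinaryHypergeometric a b c
  have hx' : x ∈ Metric.eball (0 : 𝕂) 1 := by simpa [← ofReal_norm] using hx
  have hderiv : HasSum (fun m : ℕ ↦
      (m + 1) * ordinaryHypergeometricCoefficient a b c (m + 1) * x ^ m)
      (deriv (₂F₁ a b c) x) := by
    simpa [ordinaryHypergeometricSeries_coeff, mul_comm] using
      (hF.fderiv.hasSum hx').mapL (ContinuousLinearMap.apply 𝕂 𝕂 (1 : 𝕂))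
  simp only [ordinaryHypergeometricCoefficient_succ_shift, mul_assoc (a * b / c)] at hderiv
  rw [← hderiv.unique ((hasSum_ordinaryHypergeometric _ _ _ hx).mul_left (a * b / c))]
  exact (hF.differentiableOn.differentiableAt (Metric.isOpen_eball.mem_nhds hx')).hasDerivAt

theorem hasSum_mul_pow_of_succ {u v : ℕ → 𝕂} {S : 𝕂} (hu : HasSum (fun m ↦ u m * x ^ m) S)
    (hzero : v 0 = 0) (hsucc : ∀ m, v (m + 1) = u m) : HasSum (fun m ↦ v m * x ^ m) (x * S) := by
  rw [← hasSum_nat_add_iff' 1]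
  simpa [hzero, hsucc, pow_succ', mul_left_comm x] using hu.mul_left x

theorem ordinaryHypergeometric_ode (a b : 𝕂) (hc : ∀ m : ℕ, c ≠ -m) (hx : ‖x‖ < 1) :
    x * (1 - x) * (a * b / c * ((a + 1) * (b + 1) / (c + 1) *
        ₂F₁ (a + 1 + 1) (b + 1 + 1) (c + 1 + 1) x)) +
      (c - (a + b + 1) * x) * (a * b / c * ₂F₁ (a + 1) (b + 1) (c + 1) x) -
      a * b * ₂F₁ a b c x = 0 := by
  set F := ₂F₁ a b c x
  set F₁ := a * b / c * ₂F₁ (a + 1) (b + 1) (c + 1) x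
  set F₂ := a * b / c * ((a + 1) * (b + 1) / (c + 1) *
    ₂F₁ (a + 1 + 1) (b + 1 + 1) (c + 1 + 1) x)
  set h := ordinaryHypergeometricCoefficient a b c
  have hF : HasSum (fun m ↦ h m * x ^ m) F := hasSum_ordinaryHypergeometric a b c hx
  have hF₁ : HasSum (fun m : ℕ ↦ (m + 1) * h (m + 1) * x ^ m) F₁ := by
    simpa only [h, ordinaryHypergeometricCoefficient_succ_shift, ← mul_assoc (a * b / c)] using
      (hasSum_ordinaryHypergeometric (a + 1) (b + 1) (c + 1) hx).mul_left (a * b / c)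
  have hF₂ : HasSum (fun m : ℕ ↦ (m + 1) * (m + 2) * h (m + 2) * x ^ m) F₂ := by
    refine (((hasSum_ordinaryHypergeometric (a + 1 + 1) (b + 1 + 1) (c + 1 + 1) hx).mul_left
      ((a + 1) * (b + 1) / (c + 1))).mul_left (a * b / c)).congr_fun fun m ↦ ?_
    have e₁ := ordinaryHypergeometricCoefficient_succ_shift a b c (m + 1)
    have e₂ := ordinaryHypergeometricCoefficient_succ_shift (a + 1) (b + 1) (c + 1) m
    push_cast at e₁
    linear_combination (m + 1) * x ^ m * e₁ + a * b / c * x ^ m * e₂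
  have hxF₁ : HasSum (fun m : ℕ ↦ m * h m * x ^ m) (x * F₁) :=
    hasSum_mul_pow_of_succ hF₁ (by simp) (by simp)
  have hxF₂ : HasSum (fun m : ℕ ↦ m * (m + 1) * h (m + 1) * x ^ m) (x * F₂) :=
    hasSum_mul_pow_of_succ hF₂ (by simp) fun m ↦ by push_cast; ring
  have hxxF₂ : HasSum (fun m : ℕ ↦ m * (m - 1) * h m * x ^ m) (x * (x * F₂)) :=
    hasSum_mul_pow_of_succ hxF₂ (by simp) fun m ↦ by push_cast; ring
  have hleft : HasSum (fun m : ℕ ↦ (m + 1) * (c + m) * h (m + 1) * x ^ m) (x * F₂ + c * F₁) :=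
    (hxF₂.add (hF₁.mul_left c)).congr_fun fun m ↦ by ring
  have hright : HasSum (fun m : ℕ ↦ (a + m) * (b + m) * h m * x ^ m)
      (x * (x * F₂) + (a + b + 1) * (x * F₁) + a * b * F) :=
    ((hxxF₂.add (hxF₁.mul_left (a + b + 1))).add (hF.mul_left (a * b))).congr_fun fun m ↦ by ring
  simp only [h, ordinaryHypergeometricCoefficient_succ a b (hc _)] at hleft
  linear_combination hleft.unique hright

theorem ordinaryHypergeometricCoefficient_contiguous (a b : 𝕂) (hc : ∀ m : ℕ, c ≠ -m) (m : ℕ) :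
    ordinaryHypergeometricCoefficient (a + 1) (b + 1) c (m + 1) -
      ordinaryHypergeometricCoefficient (a + 1) (b + 1) c m =
    ordinaryHypergeometricCoefficient a b c (m + 1) + (a + b + 1 - c) / c *
      ordinaryHypergeometricCoefficient (a + 1) (b + 1) (c + 1) m := by
  have hm : (m : 𝕂) + 1 ≠ 0 := Nat.cast_add_one_ne_zero m
  have hc₀ : c ≠ 0 := by simpa using hc 0
  have hcm : c + m ≠ 0 := fun h ↦ hc m (eq_neg_of_add_eq_zero_left h)
  have hpoch : (ascPochhammer 𝕂 m).eval c ≠ 0 := by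
    rw [Ne, ascPochhammer_eval_eq_zero_iff]
    rintro ⟨j, -, hj⟩
    exact hc j (by rw [hj, neg_neg])
  have hpoch_shift : (ascPochhammer 𝕂 m).eval (c + 1) =
      (ascPochhammer 𝕂 m).eval c * (c + m) / c := by
    rw [← ascPochhammer_succ_eval, ascPochhammer_succ_eval_left, mul_div_cancel_left₀ _ hc₀]
  simp only [ordinaryHypergeometricCoefficient, ascPochhammer_succ_eval_left a,
    ascPochhammer_succ_eval_left b, ascPochhammer_succ_eval, hpoch_shift, Nat.factorial_succ,
    Nat.cast_mul, Nat.cast_succ, mul_inv]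
  field_simp
  ring

theorem ordinaryHypergeometric_contiguous (a b : 𝕂) (hc : ∀ m : ℕ, c ≠ -m) (hx : ‖x‖ < 1) :
    (1 - x) * ₂F₁ (a + 1) (b + 1) c x =
      ₂F₁ a b c x + (a + b + 1 - c) / c * (x * ₂F₁ (a + 1) (b + 1) (c + 1) x) := by
  have hasSum_succ (a b c : 𝕂) :
      HasSum (fun m ↦ ordinaryHypergeometricCoefficient a b c (m + 1) * x ^ (m + 1))
        (₂F₁ a b c x - 1) := by
    simpa [ordinaryHypergeometricCoefficient] using
      (hasSum_nat_add_iff' 1).2 (hasSum_ordinaryHypergeometric a b c hx)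
  have hleft := (hasSum_succ (a + 1) (b + 1) c).sub
    ((hasSum_ordinaryHypergeometric (a + 1) (b + 1) c hx).mul_left x)
  have hright := (hasSum_succ a b c).add
    (((hasSum_ordinaryHypergeometric (a + 1) (b + 1) (c + 1) hx).mul_left x).mul_left
      ((a + b + 1 - c) / c))
  have heq := hleft.unique (hright.congr_fun fun m ↦ by
    linear_combination x ^ (m + 1) * ordinaryHypergeometricCoefficient_contiguous a b hc m)
  linear_combination heq

end PowerSeries

theorem norm_lt_one_of_mem_Ico {x : ℝ} (hx : x ∈ Ico 0 1) : ‖x‖ < 1 := by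
  rw [norm_of_nonneg hx.1]
  exact hx.2

theorem ordinaryHypergeometric_one_one (a : ℝ) {x : ℝ} (hx : |x| < 1) :
    ₂F₁ a 1 1 x = (1 - x) ^ (-a) := by
  have hbinom := (one_add_rpow_hasFPowerSeriesOnBall_zero (a := -a)).hasSum (y := -x)
    (by simpa [← ofReal_norm] using hx)
  rw [binomialSeries_eq_ordinaryHypergeometricSeries (b := (1 : ℝ))
    fun k ↦ by linarith [k.cast_nonneg (α := ℝ)]] at hbinom
  simp only [FormalMultilinearSeries.compContinuousLinearMap_apply] at hbinom
  refine (hasSum_ordinaryHypergeometric a 1 1 hx).unique ?_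
  simpa [Function.comp_def, ordinaryHypergeometricSeries_coeff, sub_eq_add_neg, mul_comm]
    using hbinom

/-! ### Boundary behaviour of power series -/

theorem isLittleO_powerSeries_nhdsLT_one {u p : ℕ → ℝ} {U P : ℝ → ℝ}
    (hU : ∀ s ∈ Ioo (0 : ℝ) 1, HasSum (fun m ↦ u m * s ^ m) (U s))
    (hP : ∀ s ∈ Ioo (0 : ℝ) 1, HasSum (fun m ↦ p m * s ^ m) (P s))
    (hp : ∀ m, 0 ≤ p m) (hup : u =o[atTop] p) (hP_top : Tendsto P (𝓝[<] 1) atTop) :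
    U =o[𝓝[<] 1] P := by
  refine isLittleO_iff.2 fun ε hε ↦ ?_
  obtain ⟨N, hN⟩ := eventually_atTop.1 (isLittleO_iff.1 hup (half_pos hε))
  set K := ∑ m ∈ Finset.range N, |u m|
  filter_upwards [Ioo_mem_nhdsLT one_pos, hP_top.eventually_ge_atTop (K / (ε / 2))] with s hs hPs
  have hPs_nonneg : 0 ≤ P s := (hP s hs).nonneg fun m ↦ mul_nonneg (hp m) (pow_nonneg hs.1.le m)
  have hhead : HasSum (fun m ↦ if m ∈ Finset.range N then |u m| else 0) K := by
    convert hasSum_sum_of_ne_finset_zero (L := .unconditional ℕ)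
      (s := Finset.range N) (fun m hm ↦ if_neg hm) using 1
    exact (Finset.sum_congr rfl fun m hm ↦ if_pos hm).symm
  have hbound : ‖U s‖ ≤ ε / 2 * P s + K := by
    refine (hU s hs).norm_le_of_bounded (((hP s hs).mul_left (ε / 2)).add hhead) fun m ↦ ?_
    have hpow : 0 ≤ s ^ m := pow_nonneg hs.1.le m
    have hterm : 0 ≤ p m * s ^ m := mul_nonneg (hp m) hpow
    rw [norm_mul, norm_of_nonneg hpow]
    split_ifs with hm
    · have : |u m| * s ^ m ≤ |u m| :=
        mul_le_of_le_one_right (abs_nonneg _) (pow_le_one₀ hs.1.le hs.2.le)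
      rw [norm_eq_abs]
      linarith [mul_nonneg (half_pos hε).le hterm]
    · have := hN m (by simpa using hm)
      rw [norm_of_nonneg (hp m)] at this
      linarith [mul_le_mul_of_nonneg_right this hpow]
  rw [norm_of_nonneg hPs_nonneg]
  linarith [(div_le_iff₀' (half_pos hε)).1 hPs]

theorem tendsto_powerSeries_div_powerSeries {u p : ℕ → ℝ} {U P : ℝ → ℝ} {L : ℝ}
    (hU : ∀ s ∈ Ioo (0 : ℝ) 1, HasSum (fun m ↦ u m * s ^ m) (U s))
    (hP : ∀ s ∈ Ioo (0 : ℝ) 1, HasSum (fun m ↦ p m * s ^ m) (P s))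
    (hp : ∀ m, 0 < p m) (hup : Tendsto (fun m ↦ u m / p m) atTop (𝓝 L))
    (hP_top : Tendsto P (𝓝[<] 1) atTop) :
    Tendsto (fun s ↦ U s / P s) (𝓝[<] 1) (𝓝 L) := by
  have hcoeff : (fun m ↦ u m - L * p m) =o[atTop] p := by
    refine (isLittleO_iff_tendsto fun m hm ↦ absurd hm (hp m).ne').2 ?_
    simpa [sub_div, (hp _).ne'] using hup.sub_const L
  have hsub := (isLittleO_powerSeries_nhdsLT_one
    (fun s hs ↦ ((hU s hs).sub ((hP s hs).mul_left L)).congr_fun fun m ↦ by ring)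
    hP (fun m ↦ (hp m).le) hcoeff hP_top).tendsto_div_nhds_zero
  refine (zero_add L ▸ hsub.add_const L).congr' ?_
  filter_upwards [hP_top.eventually_ne_atTop 0] with s hs
  rw [sub_div, mul_div_cancel_right₀ L hs, sub_add_cancel]

theorem inv_GammaSeq (a : ℝ) (n : ℕ) :
    (GammaSeq a n)⁻¹ = (ascPochhammer ℝ (n + 1)).eval a / (n ^ a * n !) := by
  rw [GammaSeq, inv_div]
  congr 1
  induction n + 1 with
  | zero => simp
  | succ m ih => rw [Finset.prod_range_succ, ih, ascPochhammer_succ_eval]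

theorem tendsto_inv_GammaSeq (a : ℝ) :
    Tendsto (fun n ↦ (GammaSeq a n)⁻¹) atTop (𝓝 (Gamma a)⁻¹) := by
  by_cases ha : Gamma a = 0
  · obtain ⟨k, rfl⟩ := (Gamma_eq_zero_iff a).1 ha
    rw [ha, inv_zero]
    refine tendsto_const_nhds.congr' ?_
    filter_upwards [eventually_ge_atTop k] with n hn
    rw [inv_GammaSeq, (ascPochhammer_eval_eq_zero_iff _ _).2 ⟨k, by omega, by simp⟩, zero_div]
  · exact (GammaSeq_tendsto_Gamma a).inv₀ ha

theorem tendsto_ascPochhammer_ratio (a b : ℝ) {c d : ℝ} (hc : ∀ m : ℕ, c ≠ -m)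
    (hd : ∀ m : ℕ, d ≠ -m) (habcd : a + b = c + d) :
    Tendsto (fun m ↦ (ascPochhammer ℝ m).eval a * (ascPochhammer ℝ m).eval b /
      ((ascPochhammer ℝ m).eval c * (ascPochhammer ℝ m).eval d)) atTop
      (𝓝 (Gamma c * Gamma d / (Gamma a * Gamma b))) := by
  rw [← tendsto_add_atTop_iff_nat 1]
  have hlim := ((tendsto_inv_GammaSeq a).mul (tendsto_inv_GammaSeq b)).div
    ((tendsto_inv_GammaSeq c).mul (tendsto_inv_GammaSeq d))
    (mul_ne_zero (inv_ne_zero (Gamma_ne_zero hc)) (inv_ne_zero (Gamma_ne_zero hd)))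
  rw [← mul_inv, ← mul_inv, inv_div_inv] at hlim
  refine hlim.congr' ?_
  filter_upwards [eventually_gt_atTop 0] with n hn
  have hn' : (0 : ℝ) < n := Nat.cast_pos.2 hn
  have hpow : (n : ℝ) ^ a * n ^ b = n ^ c * n ^ d := by
    rw [← rpow_add hn', ← rpow_add hn', habcd]
  simp only [inv_GammaSeq, div_mul_div_comm, Pi.div_apply]
  rw [mul_mul_mul_comm _ (n ! : ℝ), mul_mul_mul_comm _ (n ! : ℝ), hpow, div_div_div_cancel_right₀]
  positivity

theorem ordinaryHypergeometricCoefficient_pos {a b c : ℝ} (ha : 0 < a) (hb : 0 < b) (hc : 0 < c)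
    (m : ℕ) : 0 < ordinaryHypergeometricCoefficient a b c m :=
  mul_pos (mul_pos (mul_pos (by positivity) (ascPochhammer_pos m a ha)) (ascPochhammer_pos m b hb))
    (inv_pos.2 (ascPochhammer_pos m c hc))

theorem ordinaryHypergeometric_pos {a b c x : ℝ} (ha : 0 < a) (hb : 0 < b) (hc : 0 < c)
    (hx : x ∈ Ico 0 1) : 0 < ₂F₁ a b c x := by
  have hsum := hasSum_ordinaryHypergeometric a b c (norm_lt_one_of_mem_Ico hx)
  have hcoeff := ordinaryHypergeometricCoefficient_pos ha hb hc
  refine (hcoeff 0).trans_le ?_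
  simpa using le_hasSum hsum 0 fun m _ ↦ mul_nonneg (hcoeff m).le (pow_nonneg hx.1 m)

theorem tendsto_one_sub_nhdsLT_one : Tendsto (fun x : ℝ ↦ 1 - x) (𝓝[<] 1) (𝓝[>] 0) := by
  refine tendsto_nhdsWithin_iff.2 ⟨?_, by
    filter_upwards [self_mem_nhdsWithin] with x hx using sub_pos.2 (mem_Iio.1 hx)⟩
  exact (Continuous.tendsto' (by fun_prop) _ _ (sub_self 1)).mono_left nhdsWithin_le_nhds

theorem tendsto_one_sub_rpow_mul_ordinaryHypergeometric (a b : ℝ) {c : ℝ} (hc : ∀ m : ℕ, c ≠ -m)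
    (habc : c < a + b) :
    Tendsto (fun x ↦ (1 - x) ^ (a + b - c) * ₂F₁ a b c x) (𝓝[<] 1)
      (𝓝 (Gamma c * Gamma (a + b - c) / (Gamma a * Gamma b))) := by
  set δ := a + b - c
  have hδ_pos : 0 < δ := sub_pos.2 habc
  have hsum (a b c : ℝ) (x : ℝ) (hx : x ∈ Ioo (0 : ℝ) 1) :=
    hasSum_ordinaryHypergeometric a b c (norm_lt_one_of_mem_Ico (Ioo_subset_Ico_self hx))
  have hratio : Tendsto (fun m ↦ ordinaryHypergeometricCoefficient a b c m /
      ordinaryHypergeometricCoefficient δ 1 1 m) atTop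
      (𝓝 (Gamma c * Gamma δ / (Gamma a * Gamma b))) := by
    have hδ_ne (m : ℕ) : δ ≠ -m := by linarith [m.cast_nonneg (α := ℝ)]
    have hsum_eq : a + b = c + δ := by ring
    refine (tendsto_ascPochhammer_ratio a b hc hδ_ne hsum_eq).congr fun m ↦ ?_
    have := (ascPochhammer_pos m (1 : ℝ) one_pos).ne'
    simp only [ordinaryHypergeometricCoefficient]
    field_simp
  have hbinom : ∀ᶠ x in 𝓝[<] (1 : ℝ), (1 - x) ^ (-δ) = ₂F₁ δ 1 1 x := by
    filter_upwards [Ioo_mem_nhdsLT one_pos] with x hx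
    exact (ordinaryHypergeometric_one_one δ (abs_lt.2 ⟨by linarith [hx.1], hx.2⟩)).symm
  have htop : Tendsto (₂F₁ δ 1 1 : ℝ → ℝ) (𝓝[<] 1) atTop :=
    ((tendsto_rpow_neg_nhdsGT_zero (neg_lt_zero.2 hδ_pos)).comp tendsto_one_sub_nhdsLT_one).congr'
      hbinom
  refine (tendsto_powerSeries_div_powerSeries (hsum a b c) (hsum δ 1 1)
    (ordinaryHypergeometricCoefficient_pos hδ_pos one_pos one_pos) hratio htop).congr' ?_
  filter_upwards [hbinom, self_mem_nhdsWithin] with x hx hx1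
  rw [← hx, rpow_neg (sub_pos.2 hx1).le, div_inv_eq_mul, mul_comm]

/-! ### Reduction of order -/

/-- `y` is a (twice differentiable) solution of `y'' + P y' + Q y = 0` on `s`. -/
def IsSolutionOn (P Q : ℝ → ℝ) (s : Set ℝ) (y : ℝ → ℝ) : Prop :=
  ∃ y₁ y₂ : ℝ → ℝ, ∀ x ∈ s, HasDerivAt y (y₁ x) x ∧ HasDerivAt y₁ (y₂ x) x ∧
    y₂ x + P x * y₁ x + Q x * y x = 0

theorem isSolutionOn_of_contDiffOn {P Q y : ℝ → ℝ} {s : Set ℝ} (hs : IsOpen s)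
    (hy : ContDiffOn ℝ 2 y s)
    (hode : ∀ x ∈ s, deriv (deriv y) x + P x * deriv y x + Q x * y x = 0) :
    IsSolutionOn P Q s y := by
  have hy' : DifferentiableOn ℝ (deriv y) s :=
    (hy.deriv_of_isOpen (m := 1) hs (by norm_num)).differentiableOn one_ne_zero
  exact ⟨deriv y, deriv (deriv y), fun x hx ↦
    ⟨((hy.differentiableOn two_ne_zero).differentiableAt (hs.mem_nhds hx)).hasDerivAt,
      (hy'.differentiableAt (hs.mem_nhds hx)).hasDerivAt, hode x hx⟩⟩

-- If `w ≠ 0`, then `u' = w / q` is not integrable at `a`, so `u` cannot stay bounded there.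
theorem eq_zero_of_hasDerivAt_mul_isLittleO {u u' q : ℝ → ℝ} {a R w : ℝ} (haR : a < R)
    (hu : ∀ x ∈ Ioo a R, HasDerivAt u (u' x) x) (hw : ∀ x ∈ Ioo a R, u' x * q x = w)
    (hq : q =o[𝓝[>] a] (fun x ↦ x - a)) (hbdd : u =O[𝓝[>] a] (fun _ ↦ (1 : ℝ))) : w = 0 := by
  obtain ⟨M, hM, hbound⟩ := hbdd.exists_pos
  by_contra hw₀
  set ε := |w| / (8 * M)
  have hε : 0 < ε := div_pos (abs_pos.2 hw₀) (by positivity)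
  obtain ⟨d, hd, hsub⟩ := mem_nhdsGT_iff_exists_Ioo_subset.1
    (inter_mem (Ioo_mem_nhdsGT haR) (inter_mem hbound.bound (isLittleO_iff.1 hq hε)))
  have hsmall (x : ℝ) (hx : x ∈ Ioo a d) : x ∈ Ioo a R ∧ |u x| ≤ M ∧ |q x| ≤ ε * (x - a) := by
    obtain ⟨hxR, hux, hqx⟩ := hsub hx
    refine ⟨hxR, by simpa using hux, ?_⟩
    simpa [abs_of_pos (sub_pos.2 hx.1)] using hqx
  set t := (d - a) / 3
  have ht : 0 < t := div_pos (sub_pos.2 hd) three_pos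
  have hmem (x : ℝ) (hx : x ∈ Icc (a + t) (a + 2 * t)) : x ∈ Ioo a d :=
    ⟨by linarith [hx.1], by linarith [hx.2, show 3 * t = d - a by simp only [t]; ring]⟩
  obtain ⟨ξ, hξ, hslope⟩ := exists_hasDerivAt_eq_slope u u' (show a + t < a + 2 * t by linarith)
    (fun x hx ↦ (hu x (hsmall x (hmem x hx)).1).continuousAt.continuousWithinAt)
    (fun x hx ↦ hu x (hsmall x (hmem x (Ioo_subset_Icc_self hx))).1)
  obtain ⟨hξR, -, hqξ⟩ := hsmall ξ (hmem ξ (Ioo_subset_Icc_self hξ))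
  have hu_left := (hsmall _ (hmem (a + t) ⟨le_rfl, by linarith⟩)).2.1
  have hu_right := (hsmall _ (hmem (a + 2 * t) ⟨by linarith, le_rfl⟩)).2.1
  have hslope_bound : |u' ξ| ≤ 2 * M / t := by
    rw [hslope, abs_div, show a + 2 * t - (a + t) = t by ring, abs_of_pos ht]
    gcongr
    exact (abs_sub _ _).trans (by linarith)
  have : |w| ≤ |w| / 2 := calc
    |w| = |u' ξ| * |q ξ| := by rw [← hw ξ hξR, abs_mul]
    _ ≤ 2 * M / t * (ε * (2 * t)) := by gcongr; exact hqξ.trans (by gcongr; linarith [hξ.2])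
    _ = |w| / 2 := by simp only [ε]; field_simp; norm_num
  linarith [abs_pos.2 hw₀]

-- By Abel's identity `w = p (y' z - y z')` is constant, and `(y / z)' = w / (p z²)`.
theorem IsSolutionOn.eq_const_mul {P Q p y z : ℝ → ℝ} {a R : ℝ} (haR : a < R)
    (hy : IsSolutionOn P Q (Ioo a R) y) (hz : IsSolutionOn P Q (Ioo a R) z)
    (hz₀ : ∀ x ∈ Ioo a R, z x ≠ 0)
    (hp : ∀ x ∈ Ioo a R, HasDerivAt p (P x * p x) x) (hp₀ : ∀ x ∈ Ioo a R, p x ≠ 0)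
    (hpz : (fun x ↦ p x * z x ^ 2) =o[𝓝[>] a] (fun x ↦ x - a)) (hyz : y =O[𝓝[>] a] z) :
    ∃ C, ∀ x ∈ Ioo a R, y x = C * z x := by
  obtain ⟨y₁, y₂, hy⟩ := hy
  obtain ⟨z₁, z₂, hz⟩ := hz
  have hwronskian (x) (hx : x ∈ Ioo a R) :
      HasDerivAt (fun x ↦ p x * (y₁ x * z x - y x * z₁ x)) 0 x := by
    obtain ⟨hy₁, hy₂, hyODE⟩ := hy x hx
    obtain ⟨hz₁, hz₂, hzODE⟩ := hz x hx
    refine ((hp x hx).mul ((hy₂.mul hz₁).sub (hy₁.mul hz₂))).congr_deriv ?_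
    simp only [Pi.sub_apply, Pi.mul_apply]
    linear_combination p x * z x * hyODE - p x * y x * hzODE
  obtain ⟨w, hw⟩ := isOpen_Ioo.exists_is_const_of_deriv_eq_zero isPreconnected_Ioo
    (fun x hx ↦ (hwronskian x hx).differentiableAt.differentiableWithinAt)
    (fun x hx ↦ (hwronskian x hx).deriv)
  have hquot (x) (hx : x ∈ Ioo a R) :
      HasDerivAt (fun x ↦ y x / z x) ((y₁ x * z x - y x * z₁ x) / z x ^ 2) x :=
    (hy x hx).1.div (hz x hx).1 (hz₀ x hx)
  have hw₀ : w = 0 := by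
    refine eq_zero_of_hasDerivAt_mul_isLittleO haR hquot (fun x hx ↦ ?_) hpz ?_
    · rw [← hw x hx]
      have := hz₀ x hx
      field_simp
    · exact (isBigO_one_iff ℝ).2 (div_isBoundedUnder_of_isBigO hyz)
  obtain ⟨C, hC⟩ := isOpen_Ioo.exists_is_const_of_deriv_eq_zero isPreconnected_Ioo
    (fun x hx ↦ (hquot x hx).differentiableAt.differentiableWithinAt)
    (fun x hx ↦ by
      have hW := (mul_eq_zero.1 ((hw x hx).trans hw₀)).resolve_left (hp₀ x hx)
      rw [(hquot x hx).deriv, hW, zero_div, Pi.zero_apply])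
  exact ⟨C, fun x hx ↦ (div_eq_iff (hz₀ x hx)).1 (hC x hx)⟩

/-! ### Euler's transformation and Gauss's formula -/

/-- `y` solves Gauss's hypergeometric equation `x(1-x) y'' + (c-(a+b+1)x) y' - ab y = 0`
on `(0, 1)`, written in normal form. -/
def IsHypergeometricSolution (a b c : ℝ) (y : ℝ → ℝ) : Prop :=
  IsSolutionOn (fun x ↦ (c - (a + b + 1) * x) / (x * (1 - x))) (fun x ↦ -(a * b) / (x * (1 - x)))
    (Ioo 0 1) y

theorem isHypergeometricSolution_ordinaryHypergeometric (a b : ℝ) {c : ℝ}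
    (hc : ∀ m : ℕ, c ≠ -m) : IsHypergeometricSolution a b c (₂F₁ a b c) := by
  refine ⟨fun x ↦ a * b / c * ₂F₁ (a + 1) (b + 1) (c + 1) x, fun x ↦ a * b / c *
    ((a + 1) * (b + 1) / (c + 1) * ₂F₁ (a + 1 + 1) (b + 1 + 1) (c + 1 + 1) x), fun x hx ↦ ?_⟩
  have hx_norm : ‖x‖ < 1 := norm_lt_one_of_mem_Ico (Ioo_subset_Ico_self hx)
  refine ⟨hasDerivAt_ordinaryHypergeometric a b c hx_norm,
    (hasDerivAt_ordinaryHypergeometric (a + 1) (b + 1) (c + 1) hx_norm).const_mul _, ?_⟩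
  have hode := ordinaryHypergeometric_ode a b hc hx_norm
  have := hx.1.ne'
  have := (sub_pos.2 hx.2).ne'
  linear_combination (norm := skip) (1 / (x * (1 - x))) * hode
  field_simp
  ring

theorem IsHypergeometricSolution.one_sub_rpow_mul {a b c : ℝ} {y : ℝ → ℝ}
    (hy : IsHypergeometricSolution (c - a) (c - b) c y) :
    IsHypergeometricSolution a b c (fun x ↦ (1 - x) ^ (c - a - b) * y x) := by
  obtain ⟨y₁, y₂, hy⟩ := hy
  set e := c - a - b with he
  have hpow (s : ℝ) {x : ℝ} (hx : x ∈ Ioo (0 : ℝ) 1) :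
      HasDerivAt (fun x : ℝ ↦ (1 - x) ^ s) (-s * (1 - x) ^ (s - 1)) x := by
    convert ((hasDerivAt_id' x).const_sub 1).rpow_const (p := s) (.inl (sub_pos.2 hx.2).ne') using 1
    ring
  refine ⟨fun x ↦ -e * (1 - x) ^ (e - 1) * y x + (1 - x) ^ e * y₁ x,
    fun x ↦ -e * (-(e - 1) * (1 - x) ^ (e - 1 - 1)) * y x + -e * (1 - x) ^ (e - 1) * y₁ x +
      (-e * (1 - x) ^ (e - 1) * y₁ x + (1 - x) ^ e * y₂ x), fun x hx ↦ ?_⟩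
  obtain ⟨hy₁, hy₂, hode⟩ := hy x hx
  refine ⟨(hpow e hx).mul hy₁,
    (((hpow (e - 1) hx).const_mul (-e)).mul hy₁).add ((hpow e hx).mul hy₂), ?_⟩
  have hx₀ := hx.1.ne'
  have hx₁ := (sub_pos.2 hx.2).ne'
  simp only [rpow_sub_one hx₁]
  linear_combination (norm := skip) (1 - x) ^ e * hode
  simp only [he]
  field_simp
  ring

theorem isLittleO_rpow_self {c : ℝ} (hc : 1 < c) : (fun x : ℝ ↦ x ^ c) =o[𝓝[>] 0] fun x ↦ x := by
  have hpow : Tendsto (fun x : ℝ ↦ x ^ (c - 1)) (𝓝[>] 0) (𝓝 0) :=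
    ((continuous_rpow_const (sub_pos.2 hc).le).tendsto' 0 0
      (zero_rpow (sub_pos.2 hc).ne')).mono_left nhdsWithin_le_nhds
  refine isLittleO_of_tendsto' ?_ (hpow.congr' ?_) <;>
    filter_upwards [self_mem_nhdsWithin] with x (hx : 0 < x)
  · exact fun h ↦ absurd h hx.ne'
  · rw [rpow_sub_one hx.ne']

theorem tendsto_one_sub_rpow_nhdsGT_zero (s : ℝ) :
    Tendsto (fun x : ℝ ↦ (1 - x) ^ s) (𝓝[>] 0) (𝓝 1) := by
  have hcont : ContinuousAt (fun x : ℝ ↦ (1 - x) ^ s) 0 :=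
    ContinuousAt.rpow_const (by fun_prop) (.inl (by norm_num))
  simpa using hcont.tendsto.mono_left nhdsWithin_le_nhds

theorem hasDerivAt_rpow_mul_one_sub_rpow (s t : ℝ) {x : ℝ} (hx : x ∈ Ioo 0 1) :
    HasDerivAt (fun x ↦ x ^ s * (1 - x) ^ t)
      ((s - (s + t) * x) / (x * (1 - x)) * (x ^ s * (1 - x) ^ t)) x := by
  have hx₀ := hx.1.ne'
  have hx₁ := (sub_pos.2 hx.2).ne'
  refine ((hasDerivAt_rpow_const (p := s) (.inl hx₀)).mul
    (((hasDerivAt_id' x).const_sub 1).rpow_const (p := t) (.inl hx₁))).congr_deriv ?_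
  rw [rpow_sub_one hx₀, rpow_sub_one hx₁]
  field_simp
  ring

theorem IsHypergeometricSolution.eqOn_of_tendsto {a b c L : ℝ} {y z : ℝ → ℝ} (hc : 1 < c)
    (hy : IsHypergeometricSolution a b c y) (hz : IsHypergeometricSolution a b c z)
    (hz₀ : ∀ x ∈ Ioo 0 1, z x ≠ 0) (hL : L ≠ 0) (hy_lim : Tendsto y (𝓝[>] 0) (𝓝 L))
    (hz_lim : Tendsto z (𝓝[>] 0) (𝓝 L)) : EqOn y z (Ioo 0 1) := by
  set t := a + b + 1 - c with ht
  have hpz : (fun x ↦ x ^ c * (1 - x) ^ t * z x ^ 2) =o[𝓝[>] 0] fun x ↦ x - 0 := by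
    simpa [mul_assoc] using
      (isLittleO_rpow_self hc).mul_isBigO
        (((tendsto_one_sub_rpow_nhdsGT_zero t).mul (hz_lim.pow 2)).isBigO_one ℝ)
  obtain ⟨C, hC⟩ := hy.eq_const_mul one_pos hz hz₀ (fun x hx ↦ by
      simpa [ht] using hasDerivAt_rpow_mul_one_sub_rpow c t hx)
    (fun x hx ↦ (mul_pos (rpow_pos_of_pos hx.1 _) (rpow_pos_of_pos (sub_pos.2 hx.2) _)).ne') hpz
    (isBigO_of_div_tendsto_nhds_of_ne_zero (hz_lim.div hy_lim hL) (div_ne_zero hL hL))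
  have hC_lim : Tendsto y (𝓝[>] 0) (𝓝 (C * L)) := by
    refine (hz_lim.const_mul C).congr' ?_
    filter_upwards [Ioo_mem_nhdsGT one_pos] with x hx using (hC x hx).symm
  have hC_one : C = 1 := (mul_eq_right₀ hL).1 (tendsto_nhds_unique hC_lim hy_lim)
  exact fun x hx ↦ by rw [hC x hx, hC_one, one_mul]

theorem tendsto_ordinaryHypergeometric_nhdsGT_zero (a b c : ℝ) :
    Tendsto (₂F₁ a b c : ℝ → ℝ) (𝓝[>] 0) (𝓝 1) := by
  simpa using (hasDerivAt_ordinaryHypergeometric a b c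
    (by simp : ‖(0 : ℝ)‖ < 1)).continuousAt.tendsto.mono_left nhdsWithin_le_nhds

theorem ordinaryHypergeometric_eq_one_sub_rpow_mul {a b c x : ℝ} (hc : 1 < c) (hac : a < c)
    (hbc : b < c) (hx : x ∈ Ioo 0 1) :
    ₂F₁ a b c x = (1 - x) ^ (c - a - b) * ₂F₁ (c - a) (c - b) c x := by
  have hc' (m : ℕ) : c ≠ -m := by linarith [m.cast_nonneg (α := ℝ)]
  refine (isHypergeometricSolution_ordinaryHypergeometric a b hc').eqOn_of_tendsto hc
    (isHypergeometricSolution_ordinaryHypergeometric (c - a) (c - b) hc').one_sub_rpow_mul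
    (fun x hx ↦ ?_) one_ne_zero (tendsto_ordinaryHypergeometric_nhdsGT_zero a b c) ?_ hx
  · exact (mul_pos (rpow_pos_of_pos (sub_pos.2 hx.2) _) (ordinaryHypergeometric_pos
      (sub_pos.2 hac) (sub_pos.2 hbc) (by linarith) (Ioo_subset_Ico_self hx))).ne'
  · simpa using (tendsto_one_sub_rpow_nhdsGT_zero (c - a - b)).mul
      (tendsto_ordinaryHypergeometric_nhdsGT_zero (c - a) (c - b) c)

theorem ordinaryHypergeometric_pos_of_lt {a b c x : ℝ} (hc : 1 < c) (hac : a < c)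
    (hbc : b < c) (hx : x ∈ Ioo 0 1) : 0 < ₂F₁ a b c x := by
  rw [ordinaryHypergeometric_eq_one_sub_rpow_mul hc hac hbc hx]
  exact mul_pos (rpow_pos_of_pos (sub_pos.2 hx.2) _) (ordinaryHypergeometric_pos
    (sub_pos.2 hac) (sub_pos.2 hbc) (by linarith) (Ioo_subset_Ico_self hx))

theorem tendsto_ordinaryHypergeometric_nhdsLT_one {a b c : ℝ} (hc : 1 < c) (hac : a < c)
    (hbc : b < c) (habc : a + b < c) :
    Tendsto (₂F₁ a b c : ℝ → ℝ) (𝓝[<] 1)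
      (𝓝 (Gamma c * Gamma (c - a - b) / (Gamma (c - a) * Gamma (c - b)))) := by
  have hlim := tendsto_one_sub_rpow_mul_ordinaryHypergeometric (c - a) (c - b) (c := c)
    (fun m ↦ by linarith [m.cast_nonneg (α := ℝ)]) (by linarith)
  rw [show c - a + (c - b) - c = c - a - b by ring] at hlim
  refine hlim.congr' ?_
  filter_upwards [Ioo_mem_nhdsLT one_pos] with x hx
  exact (ordinaryHypergeometric_eq_one_sub_rpow_mul hc hac hbc hx).symm

/-! ### The radial equation -/

/-- `g` solves the radial equation `g'' + (n/r - 2br/(1-r²)) g' - k(n+k-1)/r² g = 0` on `(0, 1)`,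
which governs the degree-`k` coefficient of a weighted harmonic extension. -/
def IsRadialSolution (n b : ℝ) (k : ℕ) (g : ℝ → ℝ) : Prop :=
  IsSolutionOn (fun r ↦ n / r - 2 * b * r / (1 - r ^ 2)) (fun r ↦ -(k * (n + k - 1) / r ^ 2))
    (Ioo 0 1) g

/-- The function `r ^ k F(α, β; c; r²)`, proportional to `f_k` when `c = (n + 2k + 1) / 2`. -/
def radialHypergeometric (α β c : ℝ) (k : ℕ) (r : ℝ) : ℝ :=
  r ^ k * ₂F₁ α β c (r ^ 2)

theorem sq_mem_Ioo_zero_one {r : ℝ} (hr : r ∈ Ioo 0 1) : r ^ 2 ∈ Ioo (0 : ℝ) 1 :=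
  ⟨pow_pos hr.1 2, pow_lt_one₀ hr.1.le hr.2 two_ne_zero⟩

theorem hasDerivAt_pow_mul {h : ℝ → ℝ} {h' r : ℝ} (k : ℕ) (hr : r ≠ 0) (hh : HasDerivAt h h' r) :
    HasDerivAt (fun r ↦ r ^ k * h r) (r ^ k * (k / r * h r + h')) r := by
  refine ((hasDerivAt_pow k r).mul hh).congr_deriv ?_
  rcases k with - | k
  · simp
  · rw [Nat.add_sub_cancel]
    field_simp
    ring

theorem hasDerivAt_comp_sq {h : ℝ → ℝ} {h' r : ℝ} (hh : HasDerivAt h h' (r ^ 2)) :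
    HasDerivAt (fun r ↦ h (r ^ 2)) (2 * r * h') r :=
  (HasDerivAt.comp (h := fun r ↦ r ^ 2) r hh (hasDerivAt_pow 2 r)).congr_deriv
    (by norm_num; ring)

section Radial

variable {n b c α β : ℝ} {k : ℕ}

theorem IsHypergeometricSolution.pow_mul_comp_sq {y : ℝ → ℝ}
    (hn : n = 2 * c - 2 * k - 1) (hsum : α + β = c - 1 + b) (hprod : α * β = k * b / 2)
    (hy : IsHypergeometricSolution α β c y) :
    IsRadialSolution n b k (fun r ↦ r ^ k * y (r ^ 2)) := by
  obtain ⟨y₁, y₂, hy⟩ := hy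
  set h₁ : ℝ → ℝ := fun r ↦ k / r * y (r ^ 2) + 2 * r * y₁ (r ^ 2) with h₁_def
  set h₂ : ℝ → ℝ := fun r ↦ -k / r ^ 2 * y (r ^ 2) + k / r * (2 * r * y₁ (r ^ 2)) +
    (2 * y₁ (r ^ 2) + 2 * r * (2 * r * y₂ (r ^ 2))) with h₂_def
  refine ⟨fun r ↦ r ^ k * h₁ r, fun r ↦ r ^ k * (k / r * h₁ r + h₂ r), fun r hr ↦ ?_⟩
  obtain ⟨hy₁, hy₂, hode⟩ := hy (r ^ 2) (sq_mem_Ioo_zero_one hr)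
  have hr₀ := hr.1.ne'
  have hr₁ := (sub_pos.2 (sq_mem_Ioo_zero_one hr).2).ne'
  have hh₁ : HasDerivAt h₁ (h₂ r) r := by
    refine ((((hasDerivAt_inv hr₀).const_mul (k : ℝ)).mul (hasDerivAt_comp_sq hy₁)).add
      (((hasDerivAt_id' r).const_mul 2).mul (hasDerivAt_comp_sq hy₂))).congr_deriv ?_
    simp only [h₂_def]
    ring
  refine ⟨hasDerivAt_pow_mul k hr₀ (hasDerivAt_comp_sq hy₁), hasDerivAt_pow_mul k hr₀ hh₁, ?_⟩
  rw [hsum, hprod] at hode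
  simp only [h₁_def, h₂_def, hn]
  linear_combination (norm := skip) 4 * r ^ 2 * r ^ k * hode
  field_simp
  ring

theorem isRadialSolution_radialHypergeometric
    (hn : n = 2 * c - 2 * k - 1) (hc : ∀ m : ℕ, c ≠ -m) (hsum : α + β = c - 1 + b)
    (hprod : α * β = k * b / 2) : IsRadialSolution n b k (radialHypergeometric α β c k) :=
  (isHypergeometricSolution_ordinaryHypergeometric α β hc).pow_mul_comp_sq hn hsum hprod

theorem hasDerivAt_radialWeight (n b : ℝ) {r : ℝ} (hr : r ∈ Ioo 0 1) :
    HasDerivAt (fun r ↦ r ^ n * (1 - r ^ 2) ^ b)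
      ((n / r - 2 * b * r / (1 - r ^ 2)) * (r ^ n * (1 - r ^ 2) ^ b)) r := by
  have hr₀ := hr.1.ne'
  have hr₁ := (sub_pos.2 (sq_mem_Ioo_zero_one hr).2).ne'
  refine ((hasDerivAt_rpow_const (p := n) (.inl hr₀)).mul
    (((hasDerivAt_pow 2 r).const_sub 1).rpow_const (p := b) (.inl hr₁))).congr_deriv ?_
  rw [rpow_sub_one hr₀, rpow_sub_one hr₁]
  field_simp
  ring

theorem tendsto_sq_nhdsGT_zero : Tendsto (fun r : ℝ ↦ r ^ 2) (𝓝[>] 0) (𝓝[>] 0) := by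
  refine tendsto_nhdsWithin_iff.2 ⟨?_, by
    filter_upwards [self_mem_nhdsWithin] with r (hr : 0 < r) using pow_pos hr 2⟩
  exact ((continuous_pow 2).tendsto' 0 0 (zero_pow two_ne_zero)).mono_left nhdsWithin_le_nhds

theorem tendsto_sq_nhdsLT_one : Tendsto (fun r : ℝ ↦ r ^ 2) (𝓝[<] 1) (𝓝[<] 1) := by
  refine tendsto_nhdsWithin_iff.2 ⟨?_, by
    filter_upwards [Ioo_mem_nhdsLT one_pos] with r hr using (sq_mem_Ioo_zero_one hr).2⟩
  exact ((continuous_pow 2).tendsto' 1 1 (one_pow 2)).mono_left nhdsWithin_le_nhds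

theorem isLittleO_radialWeight_mul_sq (hn : n = 2 * c - 2 * k - 1) (hc : 1 < c) :
    (fun r ↦ r ^ n * (1 - r ^ 2) ^ b * radialHypergeometric α β c k r ^ 2) =o[𝓝[>] 0]
      fun r ↦ r := by
  have hbdd := (((tendsto_one_sub_rpow_nhdsGT_zero b).mul
    ((tendsto_ordinaryHypergeometric_nhdsGT_zero α β c).pow 2)).comp
      tendsto_sq_nhdsGT_zero).isBigO_one ℝ
  have := (isLittleO_rpow_self (c := 2 * c - 1) (by linarith)).mul_isBigO hbdd
  refine this.congr' ?_ (by simp)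
  filter_upwards [self_mem_nhdsWithin] with r (hr : 0 < r)
  have hpow : r ^ (2 * c - 1) = r ^ n * (r ^ k) ^ 2 := by
    rw [← pow_mul, ← rpow_natCast, ← rpow_add hr, hn]
    push_cast
    ring_nf
  simp only [Function.comp_apply, radialHypergeometric, hpow]
  ring

theorem IsRadialSolution.eq_const_mul_radialHypergeometric {g : ℝ → ℝ}
    (hg : IsRadialSolution n b k g) (hg₀ : g =O[𝓝[>] 0] fun r ↦ r ^ k)
    (hn : n = 2 * c - 2 * k - 1) (hc : 1 < c) (hsum : α + β = c - 1 + b)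
    (hprod : α * β = k * b / 2) (hα : α < c) (hβ : β < c) :
    ∃ C, ∀ r ∈ Ioo 0 1, g r = C * radialHypergeometric α β c k r := by
  have hg_isBigO : g =O[𝓝[>] 0] radialHypergeometric α β c k := by
    have hF := (tendsto_ordinaryHypergeometric_nhdsGT_zero α β c).comp tendsto_sq_nhdsGT_zero
    have hF_inv : (fun _ : ℝ ↦ (1 : ℝ)) =O[𝓝[>] 0] fun r ↦ ₂F₁ α β c (r ^ 2) :=
      isBigO_of_div_tendsto_nhds_of_ne_zero (by simpa using! hF) one_ne_zero
    exact (hg₀.mul hF_inv).congr_left fun r ↦ mul_one (g r)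
  refine hg.eq_const_mul one_pos
    (isRadialSolution_radialHypergeometric hn
      (fun m ↦ by linarith [m.cast_nonneg (α := ℝ)]) hsum hprod)
    (fun r hr ↦ ?_) (fun r ↦ hasDerivAt_radialWeight n b) (fun r hr ↦ ?_)
    (by simpa using isLittleO_radialWeight_mul_sq hn hc) hg_isBigO
  · exact (mul_pos (pow_pos hr.1 k)
      (ordinaryHypergeometric_pos_of_lt hc hα hβ (sq_mem_Ioo_zero_one hr))).ne'
  · exact (mul_pos (rpow_pos_of_pos hr.1 n)
      (rpow_pos_of_pos (sub_pos.2 (sq_mem_Ioo_zero_one hr).2) b)).ne'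

theorem tendsto_radialHypergeometric (hc : 1 < c) (hα : α < c) (hβ : β < c)
    (hsum : α + β < c) :
    Tendsto (radialHypergeometric α β c k) (𝓝[<] 1)
      (𝓝 (Gamma c * Gamma (c - α - β) / (Gamma (c - α) * Gamma (c - β)))) := by
  have hpow : Tendsto (fun r : ℝ ↦ r ^ k) (𝓝[<] 1) (𝓝 1) :=
    ((continuous_pow k).tendsto' 1 1 (one_pow k)).mono_left nhdsWithin_le_nhds
  have hlim := hpow.mul
    ((tendsto_ordinaryHypergeometric_nhdsLT_one hc hα hβ hsum).comp tendsto_sq_nhdsLT_one)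
  rw [one_mul] at hlim
  exact hlim

theorem hasDerivAt_radialHypergeometric {r : ℝ} (hc : ∀ m : ℕ, c ≠ -m)
    (hsum : α + β = c - 1 + b) (hprod : α * β = k * b / 2) (hr : r ∈ Ioo 0 1) :
    HasDerivAt (radialHypergeometric α β c k)
      (k * r ^ k / r * ((1 - r ^ 2) * ₂F₁ (α + 1) (β + 1) c (r ^ 2))) r := by
  have hr₀ := hr.1.ne'
  have hnorm : ‖r ^ 2‖ < 1 := norm_lt_one_of_mem_Ico (Ioo_subset_Ico_self (sq_mem_Ioo_zero_one hr))
  have hc₀ : c ≠ 0 := by simpa using hc 0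
  refine (hasDerivAt_pow_mul k hr₀
    (hasDerivAt_comp_sq (hasDerivAt_ordinaryHypergeometric α β c hnorm))).congr_deriv ?_
  rw [ordinaryHypergeometric_contiguous α β hc hnorm, hprod, hsum]
  field_simp
  ring

theorem tendsto_mul_deriv_radialHypergeometric (hc : ∀ m : ℕ, c ≠ -m)
    (hsum : α + β = c - 1 + b) (hprod : α * β = k * b / 2) (hb : -1 < b) :
    Tendsto (fun r ↦ ((1 - r ^ 2) / 2) ^ b * deriv (radialHypergeometric α β c k) r) (𝓝[<] 1)
      (𝓝 (2 ^ (-b) * k * (Gamma c * Gamma (b + 1) / (Gamma (α + 1) * Gamma (β + 1))))) := by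
  have hpow : Tendsto (fun r : ℝ ↦ 2 ^ (-b) * (k * r ^ k / r)) (𝓝[<] 1) (𝓝 (2 ^ (-b) * k)) := by
    have : ContinuousAt (fun r : ℝ ↦ 2 ^ (-b) * (k * r ^ k / r)) 1 :=
      ContinuousAt.mul (by fun_prop) (ContinuousAt.div (by fun_prop) (by fun_prop) one_ne_zero)
    simpa using this.tendsto.mono_left nhdsWithin_le_nhds
  have hF := (tendsto_one_sub_rpow_mul_ordinaryHypergeometric (α + 1) (β + 1) hc
    (by linarith)).comp tendsto_sq_nhdsLT_one
  rw [show α + 1 + (β + 1) - c = b + 1 by linarith] at hF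
  refine (hpow.mul hF).congr' ?_
  filter_upwards [Ioo_mem_nhdsLT one_pos] with r hr
  have hr₁ : 0 < 1 - r ^ 2 := sub_pos.2 (sq_mem_Ioo_zero_one hr).2
  rw [(hasDerivAt_radialHypergeometric hc hsum hprod hr).deriv, div_rpow hr₁.le zero_le_two,
    Function.comp_apply, rpow_add_one hr₁.ne', rpow_neg zero_le_two]
  ring

theorem pos_and_pos_of_mul_pos_of_add_pos {x y : ℝ} (hmul : 0 < x * y) (hadd : 0 < x + y) :
    0 < x ∧ 0 < y := by
  rcases pos_and_pos_or_neg_and_neg_of_mul_pos hmul with h | h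
  · exact h
  · linarith [h.1, h.2]

theorem IsRadialSolution.tendsto_mul_deriv {g : ℝ → ℝ}
    (hg : IsRadialSolution n b k g) (hg₀ : g =O[𝓝[>] 0] fun r ↦ r ^ k)
    (hg₁ : Tendsto g (𝓝[<] 1) (𝓝 1)) (hn : n = 2 * c - 2 * k - 1) (hc : 1 < c)
    (hb : b ∈ Ioo (-1) 1) (hsum : α + β = c - 1 + b) (hprod : α * β = k * b / 2) (hα : α < c)
    (hβ : β < c) :
    Tendsto (fun r ↦ ((1 - r ^ 2) / 2) ^ b * deriv g r) (𝓝[<] 1)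
      (𝓝 (2 ^ (-b) * (Gamma (b + 1) / Gamma (1 - b)) *
        (Gamma (c - α) * Gamma (c - β) / (Gamma (α + 1) * Gamma (β + 1))) * k)) := by
  obtain ⟨C, hC⟩ := hg.eq_const_mul_radialHypergeometric hg₀ hn hc hsum hprod hα hβ
  have hC_lim : C * (Gamma c * Gamma (1 - b) / (Gamma (c - α) * Gamma (c - β))) = 1 := by
    have hlim := tendsto_radialHypergeometric (k := k) hc hα hβ (by linarith [hb.2])
    rw [show c - α - β = 1 - b by linarith] at hlim
    refine tendsto_nhds_unique ((hlim.const_mul C).congr' ?_) hg₁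
    filter_upwards [Ioo_mem_nhdsLT one_pos] with r hr using (hC r hr).symm
  have hderiv := (tendsto_mul_deriv_radialHypergeometric
    (fun m ↦ by linarith [m.cast_nonneg (α := ℝ)]) hsum hprod hb.1).const_mul C
  have hvalue : 2 ^ (-b) * (Gamma (b + 1) / Gamma (1 - b)) *
      (Gamma (c - α) * Gamma (c - β) / (Gamma (α + 1) * Gamma (β + 1))) * k =
      C * (2 ^ (-b) * k * (Gamma c * Gamma (b + 1) / (Gamma (α + 1) * Gamma (β + 1)))) := by
    have := (Gamma_pos_of_pos (sub_pos.2 hα)).ne'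
    have := (Gamma_pos_of_pos (sub_pos.2 hβ)).ne'
    have := (Gamma_pos_of_pos (sub_pos.2 hb.2)).ne'
    field_simp at hC_lim
    rw [← hC_lim]
    field_simp
  rw [hvalue]
  refine hderiv.congr' ?_
  filter_upwards [Ioo_mem_nhdsLT one_pos] with r hr
  rw [((show EqOn g _ (Ioo 0 1) from hC).eventuallyEq_of_mem (isOpen_Ioo.mem_nhds hr)).deriv_eq,
    deriv_const_mul_field, mul_left_comm]

theorem hypergeometric_derivative_limit_general {g : ℝ → ℝ} (hn : 0 ≤ n)
    (hnk : 1 < n + 2 * k) (hb : b ∈ Ioo (-1) 1)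
    (hroots : ∀ X, X ^ 2 - ((n - 1) / 2 + k + b) * X + k * b / 2 = (X - α) * (X - β))
    (hg : IsRadialSolution n b k g) (hg₀ : g =O[𝓝[>] 0] fun r ↦ r ^ k)
    (hg₁ : Tendsto g (𝓝[<] 1) (𝓝 1)) :
    Tendsto (fun r ↦ ((1 - r ^ 2) / 2) ^ b * deriv g r) (𝓝[<] 1)
      (𝓝 (2 ^ (-b) * (Gamma (b + 1) / Gamma (1 - b)) *
        (Gamma (β + 1 - b) * Gamma (α + 1 - b) / (Gamma (α + 1) * Gamma (β + 1))) * k)) := by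
  have hprod : α * β = k * b / 2 := by linear_combination -hroots 0
  have hsum : α + β = (n - 1) / 2 + k + b := by linear_combination hroots 1 - hroots 0
  have hmul : (α + 1 - b) * (β + 1 - b) = k * (1 - b / 2) + (1 - b) * ((n + 1) / 2) := by
    linear_combination hprod + (1 - b) * hsum
  have hmul_pos : 0 < (α + 1 - b) * (β + 1 - b) := by
    have : 0 < 1 - b := sub_pos.2 hb.2
    have : 0 ≤ 1 - b / 2 := by linarith
    rw [hmul]
    positivity
  obtain ⟨hα, hβ⟩ := pos_and_pos_of_mul_pos_of_add_pos hmul_pos (by linarith [hb.2])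
  set c := (n + 2 * k + 1) / 2 with hc
  have hcα : c - α = β + 1 - b := by linarith
  have hcβ : c - β = α + 1 - b := by linarith
  rw [← hcα, ← hcβ]
  exact hg.tendsto_mul_deriv hg₀ hg₁ (by linarith) (by linarith) hb (by linarith) hprod
    (by linarith) (by linarith)

end Radial

/-- **Boundary asymptotics of the weighted harmonic extension coefficients**
(Proposition on Gaussian hypergeometric limits). -/
theorem hypergeometric_derivative_limit (n : ℕ) (hn : 1 ≤ n) (k : ℕ) (hk : 1 ≤ k)
    (b : ℝ) (hb : b ∈ Set.Ioo (-1 : ℝ) 1)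
    (α β : ℝ)
    (hroots : ∀ X : ℝ,
      X ^ 2 - (((n : ℝ) - 1) / 2 + k + b) * X + (k : ℝ) * b / 2 = (X - α) * (X - β))
    (g : ℝ → ℝ) (hg : ContDiffOn ℝ 2 g (Set.Ioo 0 1))
    (hode : ∀ r ∈ Set.Ioo (0 : ℝ) 1,
      deriv (deriv g) r + ((n : ℝ) / r - 2 * b * r / (1 - r ^ 2)) * deriv g r -
        ((k : ℝ) * ((n : ℝ) + (k : ℝ) - 1) / r ^ 2) * g r = 0)
    (h0 : Asymptotics.IsBigO (nhdsWithin 0 (Set.Ioi 0)) g (fun r : ℝ => r ^ k))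
    (h1 : Tendsto g (nhdsWithin 1 (Set.Iio 1)) (nhds 1)) :
    Tendsto (fun r : ℝ => ((1 - r ^ 2) / 2) ^ b * deriv g r) (nhdsWithin 1 (Set.Iio 1))
      (nhds ((2 : ℝ) ^ (-b) * (Gamma (b + 1) / Gamma (1 - b)) *
        (Gamma (β + 1 - b) * Gamma (α + 1 - b) / (Gamma (α + 1) * Gamma (β + 1))) * k)) := by
  exact hypergeometric_derivative_limit_general n.cast_nonneg (mod_cast (by omega : 1 < n + 2 * k))
    hb hroots (isSolutionOn_of_contDiffOn isOpen_Ioo hg fun r hr ↦ by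
      linear_combination hode r hr) h0 h1
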